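/- Classification of singular vectors, case 0 ≤ κ ≤ n−2: let (ε₁,…,ε_n) = (1^κ,0^{n−κ}) with n ≥ 2 and 0 ≤ κ ≤ n−2, and l, m ∈ ℕ. A vector of 𝒲_l⊗𝒲_m that is a simultaneous eigenvector of all Δ(k_i) (i ∈ ℤ/nℤ) and is annihilated by Δ(e_i) for all 1 ≤ i ≤ n−1 is a nonzero scalar multiple of ξ_s^{l,m} for some 0 ≤ s ≤ min(l,m); conversely every such ξ_s^{l,m} has these properties. -/

import Mathlib

/-!
A singular vector is studied through its coefficients `c(a, b)` on the kets `|a⟩⊗|b⟩`, extended by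
zero to all integer vectors `a`, `b`. With zero-based positions, `Δ(e_r) v = 0` is the family of
two-term relations
`[b_{r-1}+1] c(a, b+δ_{r-1}-δ_r) + [a_{r-1}+1] k_r(b) c(a+δ_{r-1}-δ_r, b) = 0` (`Sing.rel`), where
`k_r(b) ≠ 0` and `[k] ≠ 0` for `k ≠ 0`.

Moving the rightmost particle of `a` that is not yet at the last position one step to the right
(which never violates the exclusion at fermionic positions, the last two being bosonic) expresses
`c(a, b)` through a coefficient with the same `a + b`. Iterating, all particles of `a` reach the
last position, and then the relations kill `c(a, b)` as soon as `b` has a particle outside the last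
two positions. Hence `c(a, b) = 0` unless `a + b` lives on the last two positions
(`Sing.support`).

There remain the coefficients of `|j, l-j⟩⊗|s-j, m-s+j⟩`. For fixed `s` they satisfy a first-order
recursion in `j` (`Sing.gco_rec`), which forces them to vanish unless `s ≤ min(l, m)`, and then
determines them from the one with `j = 0` (`Sing.eq_zero`). The vector `ξ_s` solves this recursion
(`xi_sing`), so the `ξ_s` span the singular vectors (`Sing.exists_comb`). Finally, `Δ(k_{n-1})` acts
on `ξ_s` by `q^{l+m-2s}`, and these eigenvalues are distinct because `q` is not a root of unity, so
an eigenvector is a multiple of a single `ξ_s`.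
-/

open scoped BigOperators

set_option synthInstance.maxHeartbeats 1000000
set_option maxHeartbeats 1000000

noncomputable section

namespace TetraGQ

/-! ## Scalar ingredients -/

/-- `(a;qb)_m = ∏_{k=0}^{m-1} (1 - a qb^k)`. -/
def poch (qb a : ℂ) (m : ℕ) : ℂ := ∏ k ∈ Finset.range m, (1 - a * qb ^ k)

/-- The `q`-binomial `binom(m,k)_qb`, zero unless `k ≤ m`. -/
def qbinom (qb : ℂ) (m k : ℕ) : ℂ :=
  if k ≤ m then poch qb qb m / (poch qb qb k * poch qb qb (m - k)) else 0

/-- `[m] = (q^m - q^{-m})/(q - q^{-1})`. -/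
def qnum (q : ℂ) (m : ℕ) : ℂ := (q ^ m - q⁻¹ ^ m) / (q - q⁻¹)

/-- `[m]! = ∏_{k=1}^m [k]`. -/
def qfac (q : ℂ) (m : ℕ) : ℂ := ∏ k ∈ Finset.range m, qnum q (k + 1)

/-- The symmetric `q`-binomial `[m choose k]`, zero unless `k ≤ m`. -/
def qbin (q : ℂ) (m k : ℕ) : ℂ :=
  if k ≤ m then qfac q m / (qfac q k * qfac q (m - k)) else 0

/-- The 3D `R` matrix entry `R^{a,b,c}_{i,j,k}`. -/
def R3 (q : ℂ) (a b c i j k : ℕ) : ℂ :=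
  (if a + b = i + j ∧ b + c = j + k then (1 : ℂ) else 0) *
    ∑ lam ∈ Finset.range (b + 1),
      (-1 : ℂ) ^ lam *
        q ^ ((i : ℤ) * ((c : ℤ) - (j : ℤ)) + ((k : ℤ) + 1) * (lam : ℤ) +
            ((b : ℤ) - (lam : ℤ)) * ((b : ℤ) - (lam : ℤ) - (k : ℤ))) *
        (poch (q ^ 2) (q ^ 2) (c + (b - lam)) / poch (q ^ 2) (q ^ 2) c) *
        qbinom (q ^ 2) i (b - lam) * qbinom (q ^ 2) j lam

/-- The 3D `L` matrix entry `L^{a,b,c}_{i,j,k}`. -/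
def L3 (q : ℂ) (a b c i j k : ℕ) : ℂ :=
  if a = 0 ∧ b = 0 ∧ i = 0 ∧ j = 0 ∧ c = k then 1
  else if a = 1 ∧ b = 1 ∧ i = 1 ∧ j = 1 ∧ c = k then 1
  else if a = 0 ∧ b = 1 ∧ i = 0 ∧ j = 1 ∧ c = k then -q ^ (k + 1)
  else if a = 1 ∧ b = 0 ∧ i = 1 ∧ j = 0 ∧ c = k then q ^ k
  else if a = 0 ∧ b = 1 ∧ i = 1 ∧ j = 0 ∧ c + 1 = k then 1 - q ^ (2 * k)
  else if a = 1 ∧ b = 0 ∧ i = 0 ∧ j = 1 ∧ c = k + 1 then 1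
  else 0

/-- `S^(0) = R`, `S^(1) = L`. -/
def Sg (q : ℂ) (e : Bool) (a b c i j k : ℕ) : ℂ :=
  if e then L3 q a b c i j k else R3 q a b c i j k

/-- Coefficient of `z^{c0}` in the trace solution matrix element
`S₀(z)^{a,b}_{i,j}`. -/
def trCoef (q : ℂ) {n : ℕ} [NeZero n] (ε : Fin n → Bool) (a b i j : Fin n → ℕ)
    (c0 : ℕ) : ℂ :=
  ∑ᶠ c : Fin n → ℕ,
    if c 0 = c0 then
      ∏ t : Fin n, Sg q (ε t) (a t) (b t) (c t) (i t) (j t) (c (t + 1))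
    else 0

/-- Coefficient of `z^{c0}` in the boundary solution matrix element
`S₀^{1,1}(z)^{a,b}_{i,j}`. -/
def bdCoef (q : ℂ) {n : ℕ} (ε : Fin n → Bool) (a b i j : Fin n → ℕ) (c0 : ℕ) : ℂ :=
  ∑ᶠ c : Fin (n + 1) → ℕ,
    if c 0 = c0 then
      poch (q ^ 2) (q ^ 2) c0 / (poch q q c0 * poch q q (c (Fin.last n))) *
        ∏ t : Fin n, Sg q (ε t) (a t) (b t) (c t.castSucc) (i t) (j t) (c t.succ)
    else 0

/-- Coefficient of `z^{c0}` in the boundary solution matrix element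
`S₀^{s,t}(z)^{a,b}_{i,j}`. -/
def bdCoefST (q : ℂ) (s t : ℕ) {n : ℕ} (ε : Fin n → Bool) (a b i j : Fin n → ℕ)
    (c0 : ℕ) : ℂ :=
  ∑ᶠ c : Fin (n + 1) → ℕ,
    if c 0 = c0 then
      poch (q ^ 2) (q ^ 2) (s * c0) /
          (poch (q ^ s ^ 2) (q ^ s ^ 2) c0 * poch (q ^ t ^ 2) (q ^ t ^ 2) (c (Fin.last n))) *
        ∏ u : Fin n,
          Sg q (ε u) (a u) (b u)
            (if u.castSucc = 0 then s * c0 else c u.castSucc) (i u) (j u)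
            (if u.succ = Fin.last n then t * c (Fin.last n) else c u.succ)
    else 0

/-! ## The spaces `𝒲` and `𝒲⊗𝒲` -/

/-- `m` is an admissible occupation vector: at positions with `ε = 1` the entry is `≤ 1`. -/
def Ok {n : ℕ} (ε : Fin n → Bool) (m : Fin n → ℕ) : Prop := ∀ t, ε t = true → m t ≤ 1

instance {n : ℕ} (ε : Fin n → Bool) : DecidablePred (Ok ε) := fun m =>
  decidable_of_iff (∀ t, ε t = true → m t ≤ 1) Iff.rfl

/-- Basis labels of `𝒲`. -/
def Idx {n : ℕ} (ε : Fin n → Bool) : Type := {m : Fin n → ℕ // Ok ε m}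

/-- The space `𝒲` with basis `|m⟩`, over the field `L`. -/
abbrev W (L : Type) [Field L] {n : ℕ} (ε : Fin n → Bool) : Type := Idx ε →₀ L

/-- The space `𝒲 ⊗ 𝒲` with basis `|a⟩⊗|b⟩`, over the field `L`. -/
abbrev WW (L : Type) [Field L] {n : ℕ} (ε : Fin n → Bool) : Type := (Idx ε × Idx ε) →₀ L

/-- The ket `|m⟩ ∈ 𝒲`; it is `0` if any coordinate is out of range. -/
def ket (L : Type) [Field L] {n : ℕ} (ε : Fin n → Bool) (m : Fin n → ℤ) : W L ε :=
  if h : (∀ t, 0 ≤ m t) ∧ Ok ε (fun t => (m t).toNat) then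
    Finsupp.single ⟨fun t => (m t).toNat, h.2⟩ 1
  else 0

/-- The ket `|a⟩⊗|b⟩ ∈ 𝒲⊗𝒲`; it is `0` if any coordinate is out of range. -/
def kk (L : Type) [Field L] {n : ℕ} (ε : Fin n → Bool) (a b : Fin n → ℤ) : WW L ε :=
  if h : ((∀ t, 0 ≤ a t) ∧ Ok ε (fun t => (a t).toNat)) ∧
      ((∀ t, 0 ≤ b t) ∧ Ok ε (fun t => (b t).toNat)) then
    Finsupp.single (⟨fun t => (a t).toNat, h.1.2⟩, ⟨fun t => (b t).toNat, h.2.2⟩) 1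
  else 0

/-- The linear endomorphism of a free module determined by images of basis vectors. -/
def mkEnd (L : Type) [Field L] {α : Type} (v : α → (α →₀ L)) :
    (α →₀ L) →ₗ[L] (α →₀ L) :=
  Finsupp.lsum L fun m => LinearMap.toSpanSingleton L (α →₀ L) (v m)

/-- Product of vectors of `𝒲`, landing in `𝒲⊗𝒲`. -/
def tens (L : Type) [Field L] {n : ℕ} {ε : Fin n → Bool} (u v : W L ε) : WW L ε :=
  u.sum fun a ca => v.sum fun b cb => Finsupp.single (a, b) (ca * cb)

/-- The operator `A ⊗ B` on `𝒲⊗𝒲`. -/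
def opT (L : Type) [Field L] {n : ℕ} {ε : Fin n → Bool}
    (A B : W L ε →ₗ[L] W L ε) : WW L ε →ₗ[L] WW L ε :=
  mkEnd L fun mm => tens L (A (Finsupp.single mm.1 1)) (B (Finsupp.single mm.2 1))

/-- The subspace `𝒲_l ⊗ 𝒲_m` of `𝒲⊗𝒲`. -/
def WWlm (L : Type) [Field L] {n : ℕ} (ε : Fin n → Bool) (l m : ℕ) :
    Submodule L (WW L ε) :=
  Submodule.span L {v | ∃ p : Idx ε × Idx ε,
    (∑ t, p.1.1 t) = l ∧ (∑ t, p.2.1 t) = m ∧ v = Finsupp.single p 1}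

/-- The subspace `𝒲_l` of `𝒲`. -/
def Wl (L : Type) [Field L] {n : ℕ} (ε : Fin n → Bool) (l : ℕ) : Submodule L (W L ε) :=
  Submodule.span L {v | ∃ p : Idx ε, (∑ t, p.1 t) = l ∧ v = Finsupp.single p 1}

/-! ## The scalar field of formal Laurent series in `z` over `ℂ` -/

abbrev K : Type := LaurentSeries ℂ

/-- The power series `Σ_{c≥0} f(c) z^c` as an element of `K`. -/
def mkS (f : ℕ → ℂ) : K := HahnSeries.ofPowerSeries ℤ ℂ (PowerSeries.mk f)

/-- Constants `ℂ → K`. -/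
def cK : ℂ →+* K := HahnSeries.C

/-- The variable `z ∈ K`. -/
def zK : K := mkS fun c => if c = 1 then 1 else 0

/-! ## The solutions of the Yang-Baxter equation -/

/-- The unnormalized trace solution `S₀(z)` acting on `𝒲⊗𝒲`. -/
def S0tr (q : ℂ) {n : ℕ} [NeZero n] (ε : Fin n → Bool) : WW K ε →ₗ[K] WW K ε :=
  mkEnd K fun ij =>
    ∑ a ∈ Fintype.piFinset (fun t => Finset.range (ij.1.1 t + ij.2.1 t + 1)),
      mkS (trCoef q ε a (fun t => ij.1.1 t + ij.2.1 t - a t) ij.1.1 ij.2.1) •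
        kk K ε (fun t => (a t : ℤ)) (fun t => (ij.1.1 t : ℤ) + (ij.2.1 t : ℤ) - (a t : ℤ))

/-- The unnormalized boundary solution `S₀^{1,1}(z)` acting on `𝒲⊗𝒲`. -/
def S0bd (q : ℂ) {n : ℕ} (ε : Fin n → Bool) : WW K ε →ₗ[K] WW K ε :=
  mkEnd K fun ij =>
    ∑ a ∈ Fintype.piFinset (fun t => Finset.range (ij.1.1 t + ij.2.1 t + 1)),
      mkS (bdCoef q ε a (fun t => ij.1.1 t + ij.2.1 t - a t) ij.1.1 ij.2.1) •
        kk K ε (fun t => (a t : ℤ)) (fun t => (ij.1.1 t : ℤ) + (ij.2.1 t : ℤ) - (a t : ℤ))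

/-- The unnormalized boundary solution `S₀^{s,t}(z)` acting on `𝒲⊗𝒲`. -/
def S0bdST (q : ℂ) (s t : ℕ) {n : ℕ} (ε : Fin n → Bool) : WW K ε →ₗ[K] WW K ε :=
  mkEnd K fun ij =>
    ∑ a ∈ Fintype.piFinset (fun u => Finset.range (ij.1.1 u + ij.2.1 u + 1)),
      mkS (bdCoefST q s t ε a (fun u => ij.1.1 u + ij.2.1 u - a u) ij.1.1 ij.2.1) •
        kk K ε (fun u => (a u : ℤ)) (fun u => (ij.1.1 u : ℤ) + (ij.2.1 u : ℤ) - (a u : ℤ))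

/-- The diagonal gauge operator; `Kdiag pc ε s |m⟩ = pc^{s·(m₁+⋯+m_n)} |m⟩`
(`s = -1` gives `K`, `s = 1` gives `K⁻¹`). -/
def Kdiag (pc : ℂ) {n : ℕ} (ε : Fin n → Bool) (s : ℤ) : W K ε →ₗ[K] W K ε :=
  mkEnd K fun m => cK (pc ^ (s * ∑ t, (m.1 t : ℤ))) • Finsupp.single m 1

/-- The gauge transformed boundary solution `S̃₀^{1,1}(z) = (K⊗1) S₀^{1,1}(z) (1⊗K⁻¹)`. -/
def S0bdT (q pc : ℂ) {n : ℕ} (ε : Fin n → Bool) : WW K ε →ₗ[K] WW K ε :=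
  opT K (Kdiag pc ε (-1)) LinearMap.id ∘ₗ S0bd q ε ∘ₗ opT K LinearMap.id (Kdiag pc ε 1)

/-! ## The generalized quantum group actions -/

/-- Value of an occupation vector at a natural-number position. -/
def av {n : ℕ} (m : Fin n → ℕ) (p : ℕ) : ℕ := if h : p < n then m ⟨p, h⟩ else 0

/-- Unit coordinate vector at a natural-number position. -/
def dlt {n : ℕ} (p : ℕ) : Fin n → ℤ := fun t => if (t : ℕ) = p then 1 else 0

/-- `q_i = q` if `ε_i = 0` and `-q⁻¹` if `ε_i = 1` (0-based positions). -/
def qc (q : ℂ) {n : ℕ} (ε : Fin n → Bool) (p : ℕ) : ℂ :=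
  if h : p < n then (if ε ⟨p, h⟩ then -q⁻¹ else q) else q

/-- Type A generator `e_r` of the action `π_x`. -/
def eA (q : ℂ) {L : Type} [Field L] (ι : ℂ →+* L) {n : ℕ} (ε : Fin n → Bool) (x : L)
    (r : Fin n) : W L ε →ₗ[L] W L ε :=
  mkEnd L fun m =>
    (x ^ (if (r : ℕ) = 0 then 1 else 0) * ι (qnum q (av m.1 (((r : ℕ) + n - 1) % n)))) •
      ket L ε fun t => (m.1 t : ℤ) - dlt (((r : ℕ) + n - 1) % n) t + dlt (r : ℕ) t

/-- Type A generator `f_r` of the action `π_x`. -/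
def fA (q : ℂ) {L : Type} [Field L] (ι : ℂ →+* L) {n : ℕ} (ε : Fin n → Bool) (x : L)
    (r : Fin n) : W L ε →ₗ[L] W L ε :=
  mkEnd L fun m =>
    (x ^ (if (r : ℕ) = 0 then (-1 : ℤ) else 0) * ι (qnum q (av m.1 (r : ℕ)))) •
      ket L ε fun t => (m.1 t : ℤ) + dlt (((r : ℕ) + n - 1) % n) t - dlt (r : ℕ) t

/-- Type A generator `k_r^{s}` (`s = ±1`) of the action `π_x`. -/
def kA (q : ℂ) {L : Type} [Field L] (ι : ℂ →+* L) {n : ℕ} (ε : Fin n → Bool) (s : ℤ)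
    (r : Fin n) : W L ε →ₗ[L] W L ε :=
  mkEnd L fun m =>
    ι ((qc q ε (((r : ℕ) + n - 1) % n) ^ (-(av m.1 (((r : ℕ) + n - 1) % n) : ℤ)) *
        qc q ε (r : ℕ) ^ (av m.1 (r : ℕ) : ℤ)) ^ s) • Finsupp.single m 1

/-- Type B generator `e_r` of the action `π_x`. -/
def eB (q : ℂ) {L : Type} [Field L] (ι : ℂ →+* L) {n : ℕ} (ε : Fin n → Bool) (x : L)
    (r : Fin (n + 1)) : W L ε →ₗ[L] W L ε :=
  mkEnd L fun m =>
    if (r : ℕ) = 0 then x • ket L ε (fun t => (m.1 t : ℤ) + dlt 0 t)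
    else if (r : ℕ) = n then
      ι (qnum q (av m.1 (n - 1))) • ket L ε (fun t => (m.1 t : ℤ) - dlt (n - 1) t)
    else
      ι (qnum q (av m.1 ((r : ℕ) - 1))) •
        ket L ε (fun t => (m.1 t : ℤ) - dlt ((r : ℕ) - 1) t + dlt (r : ℕ) t)

/-- Type B generator `f_r` of the action `π_x`. -/
def fB (q : ℂ) {L : Type} [Field L] (ι : ℂ →+* L) {n : ℕ} (ε : Fin n → Bool) (x : L)
    (r : Fin (n + 1)) : W L ε →ₗ[L] W L ε :=
  mkEnd L fun m =>
    if (r : ℕ) = 0 then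
      (x⁻¹ * ι (qnum q (av m.1 0))) • ket L ε (fun t => (m.1 t : ℤ) - dlt 0 t)
    else if (r : ℕ) = n then ket L ε (fun t => (m.1 t : ℤ) + dlt (n - 1) t)
    else
      ι (qnum q (av m.1 (r : ℕ))) •
        ket L ε (fun t => (m.1 t : ℤ) + dlt ((r : ℕ) - 1) t - dlt (r : ℕ) t)

/-- Type B generator `k_r^{s}` (`s = ±1`) of the action `π_x`; `pc = i q^{-1/2}`. -/
def kB (q pc : ℂ) {L : Type} [Field L] (ι : ℂ →+* L) {n : ℕ} (ε : Fin n → Bool) (s : ℤ)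
    (r : Fin (n + 1)) : W L ε →ₗ[L] W L ε :=
  mkEnd L fun m =>
    ι ((if (r : ℕ) = 0 then pc⁻¹ * qc q ε 0 ^ (av m.1 0 : ℤ)
        else if (r : ℕ) = n then pc * qc q ε (n - 1) ^ (-(av m.1 (n - 1) : ℤ))
        else qc q ε ((r : ℕ) - 1) ^ (-(av m.1 ((r : ℕ) - 1) : ℤ)) *
          qc q ε (r : ℕ) ^ (av m.1 (r : ℕ) : ℤ)) ^ s) • Finsupp.single m 1

/-! ## Coproduct actions on `𝒲⊗𝒲` (type A) -/

/-- `Δ(e_r) = 1⊗e_r + e_r⊗k_r`, with `π_x` on the first factor, `π_y` on the second. -/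
def dE (q : ℂ) {L : Type} [Field L] (ι : ℂ →+* L) {n : ℕ} (ε : Fin n → Bool) (x y : L)
    (r : Fin n) : WW L ε →ₗ[L] WW L ε :=
  opT L LinearMap.id (eA q ι ε y r) + opT L (eA q ι ε x r) (kA q ι ε 1 r)

/-- `Δ'(e_r) = e_r⊗1 + k_r⊗e_r`. -/
def dE' (q : ℂ) {L : Type} [Field L] (ι : ℂ →+* L) {n : ℕ} (ε : Fin n → Bool) (x y : L)
    (r : Fin n) : WW L ε →ₗ[L] WW L ε :=
  opT L (eA q ι ε x r) LinearMap.id + opT L (kA q ι ε 1 r) (eA q ι ε y r)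

/-- `Δ(f_r) = f_r⊗1 + k_r⁻¹⊗f_r`. -/
def dF (q : ℂ) {L : Type} [Field L] (ι : ℂ →+* L) {n : ℕ} (ε : Fin n → Bool) (x y : L)
    (r : Fin n) : WW L ε →ₗ[L] WW L ε :=
  opT L (fA q ι ε x r) LinearMap.id + opT L (kA q ι ε (-1) r) (fA q ι ε y r)

/-- `Δ'(f_r) = 1⊗f_r + f_r⊗k_r⁻¹`. -/
def dF' (q : ℂ) {L : Type} [Field L] (ι : ℂ →+* L) {n : ℕ} (ε : Fin n → Bool) (x y : L)
    (r : Fin n) : WW L ε →ₗ[L] WW L ε :=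
  opT L LinearMap.id (fA q ι ε y r) + opT L (fA q ι ε x r) (kA q ι ε (-1) r)

/-- `Δ(k_r^s) = Δ'(k_r^s) = k_r^s ⊗ k_r^s`. -/
def dK (q : ℂ) {L : Type} [Field L] (ι : ℂ →+* L) {n : ℕ} (ε : Fin n → Bool) (s : ℤ)
    (r : Fin n) : WW L ε →ₗ[L] WW L ε :=
  opT L (kA q ι ε s r) (kA q ι ε s r)

/-! ## Coproduct actions on `𝒲⊗𝒲` (type B) -/

def dEB (q pc : ℂ) {L : Type} [Field L] (ι : ℂ →+* L) {n : ℕ} (ε : Fin n → Bool) (x y : L)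
    (r : Fin (n + 1)) : WW L ε →ₗ[L] WW L ε :=
  opT L LinearMap.id (eB q ι ε y r) + opT L (eB q ι ε x r) (kB q pc ι ε 1 r)

def dEB' (q pc : ℂ) {L : Type} [Field L] (ι : ℂ →+* L) {n : ℕ} (ε : Fin n → Bool) (x y : L)
    (r : Fin (n + 1)) : WW L ε →ₗ[L] WW L ε :=
  opT L (eB q ι ε x r) LinearMap.id + opT L (kB q pc ι ε 1 r) (eB q ι ε y r)

def dFB (q pc : ℂ) {L : Type} [Field L] (ι : ℂ →+* L) {n : ℕ} (ε : Fin n → Bool) (x y : L)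
    (r : Fin (n + 1)) : WW L ε →ₗ[L] WW L ε :=
  opT L (fB q ι ε x r) LinearMap.id + opT L (kB q pc ι ε (-1) r) (fB q ι ε y r)

def dFB' (q pc : ℂ) {L : Type} [Field L] (ι : ℂ →+* L) {n : ℕ} (ε : Fin n → Bool) (x y : L)
    (r : Fin (n + 1)) : WW L ε →ₗ[L] WW L ε :=
  opT L LinearMap.id (fB q ι ε y r) + opT L (fB q ι ε x r) (kB q pc ι ε (-1) r)

def dKB (q pc : ℂ) {L : Type} [Field L] (ι : ℂ →+* L) {n : ℕ} (ε : Fin n → Bool) (s : ℤ)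
    (r : Fin (n + 1)) : WW L ε →ₗ[L] WW L ε :=
  opT L (kB q pc ι ε s r) (kB q pc ι ε s r)

/-! ## Structure constants -/

/-- Type A structure constant `D_{i,j}` (as a product over 0-based positions). -/
def DA (q : ℂ) {n : ℕ} (ε : Fin n → Bool) (i j : Fin n) : ℂ :=
  ∏ p ∈ (({((i : ℕ) + n - 1) % n, (i : ℕ)} : Finset ℕ) ∩
      ({((j : ℕ) + n - 1) % n, (j : ℕ)} : Finset ℕ)),
    qc q ε p ^ (if i = j then (1 : ℤ) else -1)

/-- The set `⟨i⟩ = {i, i+1} ∩ [1,n]` of type B, translated to 0-based positions. -/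
def nodeB (n i : ℕ) : Finset ℕ :=
  if i = 0 then {0} else if i = n then {n - 1} else {i - 1, i}

/-- Type B structure constant `D_{i,j}`. -/
def DB (q : ℂ) {n : ℕ} (ε : Fin n → Bool) (i j : Fin (n + 1)) : ℂ :=
  ∏ p ∈ nodeB n (i : ℕ) ∩ nodeB n (j : ℕ), qc q ε p ^ (if i = j then (1 : ℤ) else -1)

/-! ## Distinguished vectors -/

/-- The vector `J_{n,j} = Σ_{i, Σi=j} q^{inv(i)} |i⟩⊗|1-i⟩`. -/
def Jfull (q : ℂ) {L : Type} [Field L] (ι : ℂ →+* L) {n : ℕ} (ε : Fin n → Bool)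
    (j : ℕ) : WW L ε :=
  ∑ i ∈ Fintype.piFinset (fun _ : Fin n => Finset.range 2),
    (if (∑ t, i t) = j then
        ι (q ^ (∑ s : Fin n, ∑ t : Fin n, if s < t then i s * (1 - i t) else 0))
      else 0) •
      kk L ε (fun t => (i t : ℤ)) (fun t => 1 - (i t : ℤ))

/-- Extension of a `Fin s`-tuple to `ℕ` by zero. -/
def ivf {s : ℕ} (i : Fin s → ℕ) : ℕ → ℕ := fun p => if h : p < s then i ⟨p, h⟩ else 0

/-- `inv(i₁,…,i_s) = Σ_{p<r} i_p (1 - i_r)`. -/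
def invv (s : ℕ) (iv : ℕ → ℕ) : ℕ :=
  ∑ p ∈ Finset.range s, ∑ r ∈ Finset.range s, if p < r then iv p * (1 - iv r) else 0

/-- Occupation vector `(0^{nn-s-t}, i₁,…,i_s, 1^t)`. -/
def winA (nn s t : ℕ) (iv : ℕ → ℕ) : Fin nn → ℤ := fun u =>
  if (u : ℕ) < nn - s - t then 0
  else if (u : ℕ) < nn - t then (iv ((u : ℕ) - (nn - s - t)) : ℤ)
  else 1

/-- The singular vector `ξ_t^{l,m}` for `κ = n`. -/
def xiA (q : ℂ) {L : Type} [Field L] (ι : ℂ →+* L) {n : ℕ} (ε : Fin n → Bool)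
    (l m t : ℕ) : WW L ε :=
  ∑ i ∈ Fintype.piFinset (fun _ : Fin (l + m - 2 * t) => Finset.range 2),
    (if (∑ u, i u) = l - t then ι (q ^ invv (l + m - 2 * t) (ivf i)) else 0) •
      kk L ε (winA n (l + m - 2 * t) t (ivf i))
        (winA n (l + m - 2 * t) t (fun p => 1 - ivf i p))

/-- Occupation vector `(0^{nn-s-1}, i₁,…,i_s, last)`. -/
def winA1 (nn s : ℕ) (iv : ℕ → ℕ) (last : ℤ) : Fin nn → ℤ := fun u =>
  if (u : ℕ) < nn - s - 1 then 0
  else if (u : ℕ) < nn - 1 then (iv ((u : ℕ) - (nn - s - 1)) : ℤ)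
  else last

/-- The singular vector `ξ_s^{l,m}` for `κ = n-1`. -/
def xiA1 (q : ℂ) {L : Type} [Field L] (ι : ℂ →+* L) {n : ℕ} (ε : Fin n → Bool)
    (l m s : ℕ) : WW L ε :=
  ∑ j ∈ Finset.range (s + 1),
    ∑ i ∈ Fintype.piFinset (fun _ : Fin s => Finset.range 2),
      (if (∑ u, i u) = s - j then
          ι ((-1 : ℂ) ^ j * q ^ (j * (m - s + 1)) * q ^ invv s (ivf i))
        else 0) •
        kk L ε (winA1 n s (ivf i) ((l : ℤ) + (j : ℤ) - (s : ℤ)))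
          (winA1 n s (fun p => 1 - ivf i p) ((m : ℤ) - (j : ℤ)))

/-- The singular vector `ξ_s^{l,m}` for `0 ≤ κ ≤ n-2`. -/
def xiA2 (q : ℂ) {L : Type} [Field L] (ι : ℂ →+* L) {n : ℕ} (ε : Fin n → Bool)
    (l m s : ℕ) : WW L ε :=
  ∑ j ∈ Finset.range (s + 1),
    ι ((-1 : ℂ) ^ j * q ^ ((j : ℤ) * (2 * (s : ℤ) - (m : ℤ) - (j : ℤ) - 1) + (m : ℤ) * (s : ℤ)) *
        qbin q s j) •
      kk L ε
        (fun u => if (u : ℕ) < n - 2 then 0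
          else if (u : ℕ) = n - 2 then (j : ℤ) else (l : ℤ) - (j : ℤ))
        (fun u => if (u : ℕ) < n - 2 then 0
          else if (u : ℕ) = n - 2 then (s : ℤ) - (j : ℤ) else (m : ℤ) - (s : ℤ) + (j : ℤ))

/-- The type B singular vector `ξ_l`. -/
def xiB (q pc : ℂ) {L : Type} [Field L] (ι : ℂ →+* L) {n : ℕ} (ε : Fin n → Bool)
    (l : ℕ) : WW L ε :=
  ∑ m ∈ Finset.range (l + 1),
    ι ((-pc) ^ (-(m : ℤ)) * q ^ ((m : ℤ) * (l : ℤ) - ((m * (m + 1) / 2 : ℕ) : ℤ)) *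
        qbin q l m) •
      kk L ε (fun u => if (u : ℕ) = n - 1 then (m : ℤ) else 0)
        (fun u => if (u : ℕ) = n - 1 then (l : ℤ) - (m : ℤ) else 0)

/-! ## Miscellany -/

/-- Apply a list of operators, the rightmost element of the list acting first. -/
def appList {L : Type} [Field L] {n : ℕ} {ε : Fin n → Bool}
    (ops : List (WW L ε →ₗ[L] WW L ε)) (v : WW L ε) : WW L ε :=
  ops.foldr (fun A w => A w) v

/-- A natural number as an element of `Fin n`. -/
def mfin {n : ℕ} [NeZero n] (p : ℕ) : Fin n :=
  ⟨p % n, Nat.mod_lt p (Nat.pos_of_ne_zero (NeZero.ne n))⟩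

/-- Reference weight-`l` occupation vector: `(0^{n-l},1^l)` if `κ = n`, `l·e_n` otherwise. -/
def refAN (n κ l : ℕ) : Fin n → ℕ := fun t =>
  if κ = n then (if n - l ≤ (t : ℕ) then 1 else 0) else (if (t : ℕ) = n - 1 then l else 0)

/-- The flip `P(u⊗v) = v⊗u` on `𝒲⊗𝒲`. -/
def Pop (L : Type) [Field L] {n : ℕ} (ε : Fin n → Bool) : WW L ε →ₗ[L] WW L ε :=
  mkEnd L fun p => Finsupp.single (p.2, p.1) 1

/-! ### Coefficients of vectors of `𝒲⊗𝒲` -/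

section Coefficients

variable {L : Type} [Field L] {n : ℕ} {ε : Fin n → Bool}

/-- The integer vector `a` is the occupation vector of a ket, i.e. `|a⟩` is not the zero ket. -/
def InR (ε : Fin n → Bool) (a : Fin n → ℤ) : Prop := ∀ t, 0 ≤ a t ∧ (ε t = true → a t ≤ 1)

/-- The occupation vector of a basis label, with integer entries. -/
def up (p : Idx ε) : Fin n → ℤ := fun t => (p.1 t : ℤ)

lemma InR_up (p : Idx ε) : InR ε (up p) :=
  fun t => ⟨Int.natCast_nonneg _, fun h => by have := p.2 t h; simp only [up]; omega⟩

lemma exists_up {a : Fin n → ℤ} (h : InR ε a) : ∃ p : Idx ε, up p = a := by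
  refine ⟨⟨fun t => (a t).toNat, fun t ht => ?_⟩, ?_⟩
  · have := (h t).2 ht
    show (a t).toNat ≤ 1
    omega
  · funext t
    exact Int.toNat_of_nonneg (h t).1

lemma up_injective : Function.Injective (up : Idx ε → Fin n → ℤ) := by
  intro p p' h
  apply Subtype.ext
  funext t
  have := congrFun h t
  simpa [up] using this

lemma InR_iff (a : Fin n → ℤ) :
    InR ε a ↔ (∀ t, 0 ≤ a t) ∧ Ok ε (fun t => (a t).toNat) := by
  constructor
  · intro h
    refine ⟨fun t => (h t).1, fun t ht => ?_⟩
    have := (h t).2 ht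
    show (a t).toNat ≤ 1
    omega
  · rintro ⟨h1, h2⟩ t
    refine ⟨h1 t, fun ht => ?_⟩
    have : (a t).toNat ≤ 1 := h2 t ht
    omega

lemma ket_up (p : Idx ε) : ket L ε (up p) = Finsupp.single p 1 := by
  rw [ket, dif_pos ((InR_iff _).1 (InR_up p))]
  congr 1

lemma ket_eq_zero {a : Fin n → ℤ} (h : ¬ InR ε a) : ket L ε a = 0 := by
  rw [ket, dif_neg (fun h' => h ((InR_iff _).2 h'))]

lemma kk_up (p p' : Idx ε) : kk L ε (up p) (up p') = Finsupp.single (p, p') 1 := by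
  rw [kk, dif_pos ⟨(InR_iff _).1 (InR_up p), (InR_iff _).1 (InR_up p')⟩]
  congr 1

lemma kk_eq_zero {a b : Fin n → ℤ} (h : ¬ (InR ε a ∧ InR ε b)) : kk L ε a b = 0 := by
  rw [kk, dif_neg (fun h' => h ⟨(InR_iff _).2 h'.1, (InR_iff _).2 h'.2⟩)]

open Classical in
/-- The coefficient of `|a⟩⊗|b⟩` as a linear functional on `𝒲⊗𝒲`. It is defined for all integer
vectors `a`, `b`, and vanishes identically when one of them is out of range. -/
def coef (a b : Fin n → ℤ) : WW L ε →ₗ[L] L :=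
  Finsupp.lsum L fun p => if up p.1 = a ∧ up p.2 = b then LinearMap.id else 0

open Classical in
lemma coef_single (a b : Fin n → ℤ) (p : Idx ε × Idx ε) (c : L) :
    coef a b (Finsupp.single p c) = if up p.1 = a ∧ up p.2 = b then c else 0 := by
  rw [coef, Finsupp.lsum_single]
  split_ifs <;> simp

lemma coef_up (p : Idx ε × Idx ε) (v : WW L ε) : coef (up p.1) (up p.2) v = v p := by
  classical
  induction v using Finsupp.induction_linear with
  | zero => simp
  | add f g hf hg => simp [hf, hg]
  | single a c =>
    rw [coef_single, Finsupp.single_apply]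
    simp only [up_injective.eq_iff, Prod.ext_iff]

lemma coef_eq_zero {a b : Fin n → ℤ} (h : ¬ (InR ε a ∧ InR ε b)) (v : WW L ε) :
    coef a b v = 0 := by
  classical
  induction v using Finsupp.induction_linear with
  | zero => simp
  | add f g hf hg => simp [hf, hg]
  | single p c =>
    rw [coef_single, if_neg]
    rintro ⟨rfl, rfl⟩
    exact h ⟨InR_up _, InR_up _⟩

lemma eq_zero_of_coef {v : WW L ε} (h : ∀ a b, InR ε a → InR ε b → coef a b v = 0) : v = 0 := by
  ext p
  rw [← coef_up p v]
  exact h _ _ (InR_up _) (InR_up _)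

open Classical in
lemma coef_kk {a b : Fin n → ℤ} (a' b' : Fin n → ℤ) (ha : InR ε a) (hb : InR ε b) :
    coef a' b' (kk L ε a b) = if a = a' ∧ b = b' then 1 else 0 := by
  obtain ⟨p, rfl⟩ := exists_up ha
  obtain ⟨p', rfl⟩ := exists_up hb
  rw [kk_up, coef_single]

open Classical in
/-- For in-range `a'`, `b'`, the ket may be out of range: both sides then vanish. -/
lemma coef_kk' {a' b' : Fin n → ℤ} (a b : Fin n → ℤ) (ha : InR ε a') (hb : InR ε b') :
    coef a' b' (kk L ε a b) = if a = a' ∧ b = b' then 1 else 0 := by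
  by_cases h : InR ε a ∧ InR ε b
  · exact coef_kk a' b' h.1 h.2
  · rw [kk_eq_zero h, if_neg, map_zero]
    rintro ⟨rfl, rfl⟩
    exact h ⟨ha, hb⟩

lemma tens_smul_ket (a b : Fin n → ℤ) (c d : L) :
    tens L (c • ket L ε a) (d • ket L ε b) = (c * d) • kk L ε a b := by
  by_cases ha : InR ε a
  · by_cases hb : InR ε b
    · obtain ⟨p, rfl⟩ := exists_up ha
      obtain ⟨p', rfl⟩ := exists_up hb
      rw [ket_up, ket_up, kk_up, tens]
      simp
    · rw [ket_eq_zero hb, kk_eq_zero (fun h => hb h.2), tens]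
      simp
  · rw [ket_eq_zero ha, kk_eq_zero (fun h => ha h.1), tens]
    simp

lemma mkEnd_single {α : Type} (v : α → (α →₀ L)) (p : α) :
    mkEnd L v (Finsupp.single p 1) = v p := by
  rw [mkEnd, Finsupp.lsum_single]
  simp

end Coefficients

/-! ### Matrix entries of the raising operators -/

section Action

variable {L : Type} [Field L] {n : ℕ} {ε : Fin n → Bool}

/-- The `q`-number `[k] = (q^k - q^{-k})/(q - q⁻¹)` of an integer `k`. -/
def qz (q : ℂ) (k : ℤ) : ℂ := (q ^ k - q ^ (-k)) / (q - q⁻¹)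

lemma qnum_eq_qz (q : ℂ) (m : ℕ) : qnum q m = qz q m := by
  simp [qnum, qz]

lemma zpow_ne_one {q : ℂ} (hq : ∀ k : ℕ, k ≠ 0 → q ^ k ≠ 1) {k : ℤ} (hk : k ≠ 0) :
    q ^ k ≠ 1 := by
  obtain ⟨m, rfl | rfl⟩ := k.eq_nat_or_neg
  · rw [zpow_natCast]
    exact hq m (by simpa using hk)
  · rw [zpow_neg, zpow_natCast, Ne, inv_eq_one]
    exact hq m (by simpa using hk)

lemma qz_ne_zero {q : ℂ} (hq0 : q ≠ 0) (hq : ∀ k : ℕ, k ≠ 0 → q ^ k ≠ 1) {k : ℤ} (hk : k ≠ 0) :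
    qz q k ≠ 0 := by
  have key : ∀ j : ℤ, j ≠ 0 → q ^ j - q ^ (-j) ≠ 0 := by
    intro j hj h
    apply zpow_ne_one hq (k := 2 * j) (by omega)
    rw [two_mul, zpow_add₀ hq0]
    nth_rewrite 1 [sub_eq_zero.1 h]
    rw [← zpow_add₀ hq0]
    simp
  exact div_ne_zero (key k hk) (by simpa using key 1 one_ne_zero)

lemma qz_zero (q : ℂ) : qz q 0 = 0 := by simp [qz]

lemma qc_ne_zero {q : ℂ} (hq0 : q ≠ 0) (p : ℕ) : qc q ε p ≠ 0 := by
  unfold qc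
  split_ifs <;> simp [hq0]

/-- The eigenvalue of `k_r` on `|b⟩`, where `i` is the position preceding `r`. -/
def kv (q : ℂ) (ε : Fin n → Bool) (i r : Fin n) (b : Fin n → ℤ) : ℂ :=
  qc q ε i ^ (-(b i)) * qc q ε r ^ (b r)

lemma kv_ne_zero {q : ℂ} (hq0 : q ≠ 0) (i r : Fin n) (b : Fin n → ℤ) : kv q ε i r b ≠ 0 :=
  mul_ne_zero (zpow_ne_zero _ (qc_ne_zero hq0 _)) (zpow_ne_zero _ (qc_ne_zero hq0 _))

lemma pred_mod {i r : Fin n} (h : (i : ℕ) + 1 = r) : ((r : ℕ) + n - 1) % n = i := by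
  have : (r : ℕ) + n - 1 = i + n := by omega
  rw [this, Nat.add_mod_right, Nat.mod_eq_of_lt i.2]

lemma av_val (m : Fin n → ℕ) (i : Fin n) : av m i = m i := by simp [av]

lemma dE_single (q : ℂ) (ι : ℂ →+* L) (x y : L) {i r : Fin n} (h : (i : ℕ) + 1 = r)
    (p : Idx ε × Idx ε) :
    dE q ι ε x y r (Finsupp.single p 1) =
      ι (qz q (up p.2 i)) • kk L ε (up p.1) (up p.2 - dlt i + dlt r) +
      (ι (qz q (up p.1 i)) * ι (kv q ε i r (up p.2))) •
        kk L ε (up p.1 - dlt i + dlt r) (up p.2) := by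
  have hr : (r : ℕ) ≠ 0 := by omega
  have e1 : ∀ (z : L) (s : Idx ε), eA q ι ε z r (Finsupp.single s 1) =
      ι (qz q (up s i)) • ket L ε (up s - dlt i + dlt r) := by
    intro z s
    rw [eA, mkEnd_single, pred_mod h, if_neg hr, av_val, qnum_eq_qz, pow_zero, one_mul]
    rfl
  have e2 : ∀ s : Idx ε, kA q ι ε 1 r (Finsupp.single s 1) =
      ι (kv q ε i r (up s)) • ket L ε (up s) := by
    intro s
    rw [kA, mkEnd_single, pred_mod h, av_val, av_val, zpow_one, ket_up]
    rfl
  rw [dE, LinearMap.add_apply, opT, opT, mkEnd_single, mkEnd_single, e1, e1, e2,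
    LinearMap.id_apply, ← ket_up p.1, tens_smul_ket]
  congr 1
  rw [← one_smul L (ket L ε (up p.1)), tens_smul_ket, one_mul]

lemma dE_kk (q : ℂ) (ι : ℂ →+* L) (x y : L) {i r : Fin n} (h : (i : ℕ) + 1 = r)
    {a b : Fin n → ℤ} (ha : InR ε a) (hb : InR ε b) :
    dE q ι ε x y r (kk L ε a b) =
      ι (qz q (b i)) • kk L ε a (b - dlt i + dlt r) +
      (ι (qz q (a i)) * ι (kv q ε i r b)) • kk L ε (a - dlt i + dlt r) b := by
  obtain ⟨p, rfl⟩ := exists_up ha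
  obtain ⟨p', rfl⟩ := exists_up hb
  rw [kk_up, dE_single q ι x y h]

lemma dlt_self (i : Fin n) : (dlt (i : ℕ) : Fin n → ℤ) i = 1 := by simp [dlt]

lemma dlt_ne {p : ℕ} {t : Fin n} (h : (t : ℕ) ≠ p) : (dlt p : Fin n → ℤ) t = 0 := by
  simp [dlt, h]

/-- The matrix entries of `Δ(e_r)`: the coefficient of `|a⟩⊗|b⟩` in `Δ(e_r) v`. -/
lemma coef_dE (q : ℂ) (ι : ℂ →+* L) (x y : L) {i r : Fin n} (h : (i : ℕ) + 1 = r)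
    {a b : Fin n → ℤ} (ha : InR ε a) (hb : InR ε b) (v : WW L ε) :
    coef a b (dE q ι ε x y r v) =
      ι (qz q (b i + 1)) * coef a (b + dlt i - dlt r) v +
      ι (qz q (a i + 1)) * ι (kv q ε i r b) * coef (a + dlt i - dlt r) b v := by
  classical
  have hir : (i : ℕ) ≠ r := by omega
  induction v using Finsupp.induction_linear with
  | zero => simp
  | add f g hf hg => rw [map_add, map_add, hf, hg, map_add, map_add]; ring
  | single p c =>
    have hc : (Finsupp.single p c : WW L ε) = c • Finsupp.single p 1 := by simp
    have sh : ∀ u w : Fin n → ℤ, u - dlt i + dlt r = w ↔ u = w + dlt i - dlt r := by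
      intro u w
      constructor
      · rintro rfl; abel
      · rintro rfl; abel
    have hi : ∀ w : Fin n → ℤ, (w + dlt i - dlt r : Fin n → ℤ) i = w i + 1 := by
      intro w
      simp [dlt_self, dlt_ne hir]
    rw [hc, map_smul, dE_single q ι x y h, map_smul, map_add, map_smul, map_smul,
      coef_kk' _ _ ha hb, coef_kk' _ _ ha hb, map_smul, map_smul, coef_single, coef_single]
    simp only [sh, smul_eq_mul, mul_add]
    congr 1
    · split_ifs with h1
      · rw [h1.2, hi]; ring
      · simp
    · split_ifs with h1
      · rw [h1.1, h1.2, hi]; ring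
      · simp

end Action

/-! ### Support of singular vectors -/

section Support

variable {L : Type} [Field L] {n : ℕ} {ε : Fin n → Bool}

/-- A vector is singular if it is annihilated by `Δ(e_r)` for all `r ≠ 0`; no weight condition is
imposed. -/
def Sing (q : ℂ) (ι : ℂ →+* L) (x y : L) (v : WW L ε) : Prop :=
  ∀ r : Fin n, (r : ℕ) ≠ 0 → dE q ι ε x y r v = 0

lemma coef_of_mem {l m : ℕ} {v : WW L ε} (hv : v ∈ WWlm L ε l m) {a b : Fin n → ℤ}
    (h : ¬ ((∑ t, a t) = l ∧ (∑ t, b t) = m)) : coef a b v = 0 := by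
  classical
  induction hv using Submodule.span_induction with
  | zero => simp
  | add f g _ _ hf hg => rw [map_add, hf, hg, add_zero]
  | smul c f _ hf => rw [map_smul, hf, smul_zero]
  | mem w hw =>
    obtain ⟨p, h1, h2, rfl⟩ := hw
    rw [coef_single, if_neg]
    rintro ⟨rfl, rfl⟩
    apply h
    simp only [up]
    exact ⟨by exact_mod_cast h1, by exact_mod_cast h2⟩

lemma kk_mem {l m : ℕ} {a b : Fin n → ℤ} (ha : (∑ t, a t) = l) (hb : (∑ t, b t) = m) :
    kk L ε a b ∈ WWlm L ε l m := by
  by_cases h : InR ε a ∧ InR ε b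
  · obtain ⟨p, rfl⟩ := exists_up h.1
    obtain ⟨p', rfl⟩ := exists_up h.2
    simp only [up] at ha hb
    rw [kk_up]
    exact Submodule.subset_span ⟨(p, p'), by exact_mod_cast ha, by exact_mod_cast hb, rfl⟩
  · rw [kk_eq_zero h]
    exact zero_mem _

/-- The relation between coefficients expressing `Δ(e_r) v = 0`. -/
lemma Sing.rel {q : ℂ} {ι : ℂ →+* L} {x y : L} {v : WW L ε} (hv : Sing q ι x y v)
    {i r : Fin n} (h : (i : ℕ) + 1 = r) {a b : Fin n → ℤ} (ha : InR ε a) (hb : InR ε b) :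
    ι (qz q (b i + 1)) * coef a (b + dlt i - dlt r) v +
      ι (qz q (a i + 1)) * ι (kv q ε i r b) * coef (a + dlt i - dlt r) b v = 0 := by
  rw [← coef_dE q ι x y h ha hb, hv r (by omega), map_zero]

/-- A particle at `i` may be moved to the next position `r` if `r` is empty or bosonic. -/
lemma InR.move {a : Fin n → ℤ} (ha : InR ε a) {i r : Fin n} (h : (i : ℕ) + 1 = r)
    (hi : 0 < a i) (hr : a r = 0 ∨ ε r = false) : InR ε (a - dlt i + dlt r) := by
  intro t
  have h0 := ha t
  by_cases h1 : t = i
  · subst h1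
    have e : (a - dlt t + dlt r : Fin n → ℤ) t = a t - 1 := by
      have : (t : ℕ) ≠ r := by omega
      simp [dlt_self, dlt_ne this]
    rw [e]
    exact ⟨by omega, fun h => by have := h0.2 h; omega⟩
  · have h1' : (t : ℕ) ≠ i := fun h => h1 (Fin.ext h)
    by_cases h2 : t = r
    · subst h2
      have e : (a - dlt i + dlt t : Fin n → ℤ) t = a t + 1 := by
        simp [dlt_self, dlt_ne h1']
      rw [e]
      refine ⟨by omega, fun h => ?_⟩
      rcases hr with hr | hr
      · omega
      · rw [hr] at h; cases h
    · have h2' : (t : ℕ) ≠ r := fun h => h2 (Fin.ext h)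
      have e : (a - dlt i + dlt r : Fin n → ℤ) t = a t := by
        simp [dlt_ne h1', dlt_ne h2']
      rw [e]
      exact h0

/-- A nonzero occupation vector on the positions `< N` has a rightmost particle there. -/
lemma exists_last {a : Fin n → ℤ} (N : ℕ) (h : ∃ t : Fin n, (t : ℕ) < N ∧ a t ≠ 0) :
    ∃ t : Fin n, (t : ℕ) < N ∧ a t ≠ 0 ∧ ∀ u : Fin n, t < u → (u : ℕ) < N → a u = 0 := by
  classical
  obtain ⟨t0, h0⟩ := h
  let S : Finset (Fin n) := Finset.univ.filter fun t => (t : ℕ) < N ∧ a t ≠ 0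
  have hS : S.Nonempty := ⟨t0, by simpa [S] using h0⟩
  have hm := Finset.max'_mem S hS
  simp only [S, Finset.mem_filter, Finset.mem_univ, true_and] at hm
  refine ⟨S.max' hS, hm.1, hm.2, fun u hu huN => ?_⟩
  by_contra hne
  have := Finset.le_max' S u (by simp [S, huN, hne])
  exact absurd hu (not_lt.2 this)

/-- The total distance of the particles of `a` from the last position. -/
def dist' (a : Fin n → ℤ) : ℤ := ∑ t : Fin n, ((n : ℤ) - 1 - (t : ℕ)) * a t

lemma dist'_nonneg {a : Fin n → ℤ} (ha : InR ε a) : 0 ≤ dist' a :=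
  Finset.sum_nonneg fun t _ => mul_nonneg (by have := t.2; omega) (ha t).1

lemma sum_mul_dlt (f : Fin n → ℤ) (i : Fin n) : ∑ t, f t * dlt (n := n) i t = f i := by
  rw [Finset.sum_eq_single i]
  · rw [dlt_self, mul_one]
  · intro t _ ht
    rw [dlt_ne (fun h => ht (Fin.ext h)), mul_zero]
  · simp

lemma dist'_move (a : Fin n → ℤ) {i r : Fin n} (h : (i : ℕ) + 1 = r) :
    dist' (a - dlt i + dlt r) = dist' a - 1 := by
  have e : dist' (a - dlt i + dlt r) = dist' a -
      ∑ t : Fin n, ((n : ℤ) - 1 - (t : ℕ)) * dlt (n := n) i t +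
      ∑ t : Fin n, ((n : ℤ) - 1 - (t : ℕ)) * dlt (n := n) r t := by
    simp only [dist']
    rw [← Finset.sum_sub_distrib, ← Finset.sum_add_distrib]
    refine Finset.sum_congr rfl fun t _ => ?_
    simp only [Pi.add_apply, Pi.sub_apply]
    ring
  rw [e, sum_mul_dlt (fun t => (n : ℤ) - 1 - (t : ℕ)), sum_mul_dlt (fun t => (n : ℤ) - 1 - (t : ℕ))]
  omega

/-- A singular vector only involves kets without particles outside the last two positions:
`Δ(e)` relates the coefficient of `|a⟩⊗|b⟩` to one where `a` is closer to the last position, so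
that one ends up with all particles of `a` there. -/
lemma Sing.support {q : ℂ} (hq0 : q ≠ 0) (hq : ∀ k : ℕ, k ≠ 0 → q ^ k ≠ 1) {ι : ℂ →+* L}
    {x y : L} {v : WW L ε} (hv : Sing q ι x y v) (hn : 2 ≤ n)
    (hb2 : ∀ t : Fin n, n - 2 ≤ (t : ℕ) → ε t = false)
    {a b : Fin n → ℤ} (ha : InR ε a) (hb : InR ε b)
    (h : ∃ t : Fin n, (t : ℕ) < n - 2 ∧ a t + b t ≠ 0) : coef a b v = 0 := by
  have hι : ∀ z : ℂ, z ≠ 0 → ι z ≠ 0 := fun z hz => (map_ne_zero ι).2 hz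
  have main : ∀ (N : ℕ) (a b : Fin n → ℤ), InR ε a → InR ε b → dist' a < N →
      (∃ t : Fin n, (t : ℕ) < n - 2 ∧ a t + b t ≠ 0) → coef a b v = 0 := by
    intro N
    induction N with
    | zero =>
      intro a b ha _ hd
      have := dist'_nonneg ha
      simp only [Nat.cast_zero] at hd
      omega
    | succ N ih =>
      intro a b ha hb hd ⟨t, ht, htab⟩
      by_cases hA : ∃ i : Fin n, (i : ℕ) < n - 1 ∧ a i ≠ 0
      · obtain ⟨i, hi1, hi2, hi3⟩ := exists_last _ hA
        obtain ⟨r, h⟩ : ∃ r : Fin n, (i : ℕ) + 1 = r := ⟨⟨i + 1, by omega⟩, rfl⟩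
        have ha' : InR ε (a - dlt i + dlt r) := by
          refine ha.move h (lt_of_le_of_ne (ha i).1 hi2.symm) ?_
          by_cases hr : (r : ℕ) < n - 1
          · exact Or.inl (hi3 r (Fin.lt_def.2 (by omega)) hr)
          · exact Or.inr (hb2 r (by omega))
        have hrel := hv.rel h ha' hb
        have e1 : (a - dlt i + dlt r + dlt i - dlt r : Fin n → ℤ) = a := by abel
        have hir : (i : ℕ) ≠ r := by omega
        have e2 : (a - dlt i + dlt r : Fin n → ℤ) i + 1 = a i := by
          simp [dlt_self, dlt_ne hir]
        have hz : coef (a - dlt i + dlt r) (b + dlt i - dlt r) v = 0 := by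
          by_cases hb' : InR ε (b + dlt i - dlt r)
          · refine ih _ _ ha' hb' ?_ ⟨t, ht, ?_⟩
            · rw [dist'_move a h]; push_cast at hd; omega
            · simp only [Pi.add_apply, Pi.sub_apply]
              intro h0
              apply htab
              linarith
          · exact coef_eq_zero (fun h' => hb' h'.2) v
        rw [hz, mul_zero, zero_add, e1, e2] at hrel
        exact (mul_eq_zero.1 hrel).resolve_left
          (mul_ne_zero (hι _ (qz_ne_zero hq0 hq hi2)) (hι _ (kv_ne_zero hq0 _ _ _)))
      · push Not at hA
        have hat : a t = 0 := hA t (by omega)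
        obtain ⟨i, hi1, hi2, hi3⟩ := exists_last (a := b) (n - 2) ⟨t, ht, by omega⟩
        obtain ⟨r, h⟩ : ∃ r : Fin n, (i : ℕ) + 1 = r := ⟨⟨i + 1, by omega⟩, rfl⟩
        have hb' : InR ε (b - dlt i + dlt r) := by
          refine hb.move h (lt_of_le_of_ne (hb i).1 hi2.symm) ?_
          by_cases hr : (r : ℕ) < n - 2
          · exact Or.inl (hi3 r (Fin.lt_def.2 (by omega)) hr)
          · exact Or.inr (hb2 r (by omega))
        have hrel := hv.rel h ha hb'
        have e1 : (b - dlt i + dlt r + dlt i - dlt r : Fin n → ℤ) = b := by abel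
        have hir : (i : ℕ) ≠ r := by omega
        have e2 : (b - dlt i + dlt r : Fin n → ℤ) i + 1 = b i := by
          simp [dlt_self, dlt_ne hir]
        -- the second term vanishes, as it would need a particle of `a` at position `r < n - 1`
        have hz : coef (a + dlt i - dlt r) (b - dlt i + dlt r) v = 0 := by
          refine coef_eq_zero (fun h' => ?_) v
          have := (h'.1 r).1
          simp [dlt_self, dlt_ne hir.symm, hA r (by omega)] at this
        rw [hz, mul_zero, add_zero, e1, e2] at hrel
        exact (mul_eq_zero.1 hrel).resolve_left (hι _ (qz_ne_zero hq0 hq hi2))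
  exact main (dist' a + 1).toNat a b ha hb (by have := dist'_nonneg ha; omega) h

end Support

/-! ### The recursion on the last two positions -/

section TwoModes

variable {L : Type} [Field L] {n : ℕ} {ε : Fin n → Bool}

/-- The occupation vector `(0^{n-2}, p, q)`. -/
def vec (n : ℕ) (p q : ℤ) : Fin n → ℤ := fun u =>
  if (u : ℕ) < n - 2 then 0 else if (u : ℕ) = n - 2 then p else q

lemma vec_fst {i : Fin n} (hi : (i : ℕ) = n - 2) (p q : ℤ) : vec n p q i = p := by
  simp [vec, hi]

lemma vec_snd {i r : Fin n} (hi : (i : ℕ) = n - 2) (h : (i : ℕ) + 1 = r) (p q : ℤ) :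
    vec n p q r = q := by
  rw [vec, if_neg (by omega), if_neg (by omega)]

lemma vec_eq {i r : Fin n} (hi : (i : ℕ) = n - 2) (h : (i : ℕ) + 1 = r) (p q : ℤ) :
    vec n p q = fun t => p * dlt (n := n) i t + q * dlt (n := n) r t := by
  funext t
  have := t.2
  have := r.2
  simp only [vec, dlt]
  split_ifs <;> omega

lemma sum_vec {i r : Fin n} (hi : (i : ℕ) = n - 2) (h : (i : ℕ) + 1 = r) (p q : ℤ) :
    ∑ t, vec n p q t = p + q := by
  rw [vec_eq hi h, Finset.sum_add_distrib, sum_mul_dlt (fun _ => p), sum_mul_dlt (fun _ => q)]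

lemma vec_down {i r : Fin n} (hi : (i : ℕ) = n - 2) (h : (i : ℕ) + 1 = r) (p q : ℤ) :
    vec n p q - dlt i + dlt r = vec n (p - 1) (q + 1) := by
  rw [vec_eq hi h, vec_eq hi h]
  funext t
  simp only [Pi.add_apply, Pi.sub_apply]
  ring

lemma vec_up {i r : Fin n} (hi : (i : ℕ) = n - 2) (h : (i : ℕ) + 1 = r) (p q : ℤ) :
    vec n p q + dlt i - dlt r = vec n (p + 1) (q - 1) := by
  rw [vec_eq hi h, vec_eq hi h]
  funext t
  simp only [Pi.add_apply, Pi.sub_apply]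
  ring

lemma vec_add (p q p' q' : ℤ) : vec n p q + vec n p' q' = vec n (p + p') (q + q') := by
  funext t
  simp only [vec, Pi.add_apply]
  split_ifs <;> simp

lemma InR_vec (hb2 : ∀ t : Fin n, n - 2 ≤ (t : ℕ) → ε t = false) {p q : ℤ} (hp : 0 ≤ p)
    (hq : 0 ≤ q) : InR ε (vec n p q) := by
  intro t
  simp only [vec]
  split_ifs with h1 h2
  · simp
  · exact ⟨hp, fun h => by rw [hb2 t (by omega)] at h; cases h⟩
  · exact ⟨hq, fun h => by rw [hb2 t (by omega)] at h; cases h⟩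

lemma nonneg_of_InR_vec {i r : Fin n} (hi : (i : ℕ) = n - 2) (h : (i : ℕ) + 1 = r) {p q : ℤ}
    (hv : InR ε (vec n p q)) : 0 ≤ p ∧ 0 ≤ q := by
  have h1 := (hv i).1
  have h2 := (hv r).1
  rw [vec_fst hi] at h1
  rw [vec_snd hi h] at h2
  exact ⟨h1, h2⟩

lemma eq_vec {i r : Fin n} (hi : (i : ℕ) = n - 2) (h : (i : ℕ) + 1 = r) {a : Fin n → ℤ}
    (ha : ∀ t : Fin n, (t : ℕ) < n - 2 → a t = 0) : a = vec n (a i) (a r) := by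
  funext t
  simp only [vec]
  split_ifs with h1 h2
  · exact ha t h1
  · rw [Fin.ext (h2.trans hi.symm)]
  · have := t.2
    have := r.2
    rw [Fin.ext (by omega : (t : ℕ) = r)]

/-- The coefficient of `|0^{n-2}, j, l-j⟩ ⊗ |0^{n-2}, s-j, m-s+j⟩`. -/
def gco (v : WW L ε) (l m s j : ℤ) : L := coef (vec n j (l - j)) (vec n (s - j) (m - s + j)) v

lemma gco_eq_zero {i r : Fin n} (hi : (i : ℕ) = n - 2) (h : (i : ℕ) + 1 = r) (v : WW L ε)
    {l m s j : ℤ} (hj : ¬ (0 ≤ j ∧ j ≤ l ∧ j ≤ s ∧ s - m ≤ j)) : gco v l m s j = 0 := by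
  refine coef_eq_zero (fun h' => hj ?_) v
  have h1 := nonneg_of_InR_vec hi h h'.1
  have h2 := nonneg_of_InR_vec hi h h'.2
  omega

/-- The two-term recursion in `j` imposed by `Δ(e_{n-1}) v = 0`. -/
lemma Sing.gco_rec {q : ℂ} {ι : ℂ →+* L} {x y : L} {v : WW L ε} (hv : Sing q ι x y v)
    (hb2 : ∀ t : Fin n, n - 2 ≤ (t : ℕ) → ε t = false)
    {i r : Fin n} (hi : (i : ℕ) = n - 2) (h : (i : ℕ) + 1 = r)
    {l m s j : ℤ} (h1 : 1 ≤ j) (h2 : j ≤ l + 1) (h3 : j ≤ s) (h4 : s - m ≤ j) :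
    ι (qz q (s - j + 1)) * gco v l m s (j - 1) +
      ι (qz q j) * ι (kv q ε i r (vec n (s - j) (m - s + j))) * gco v l m s j = 0 := by
  have hrel := hv.rel h (a := vec n (j - 1) (l - j + 1)) (b := vec n (s - j) (m - s + j))
    (InR_vec hb2 (by omega) (by omega)) (InR_vec hb2 (by omega) (by omega))
  rw [vec_up hi h, vec_up hi h, vec_fst hi, vec_fst hi, sub_add_cancel] at hrel
  unfold gco
  rw [show l - (j - 1) = l - j + 1 by ring, show s - (j - 1) = s - j + 1 by ring,
    show m - s + (j - 1) = m - s + j - 1 by ring]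
  rw [show l - j + 1 - 1 = l - j by ring] at hrel
  exact hrel

/-- A singular vector of `𝒲_l⊗𝒲_m` is determined by its coefficients of
`|0^{n-2}, 0, l⟩ ⊗ |0^{n-2}, s, m-s⟩` with `s ≤ min(l, m)`. The other values of `s` contribute
nothing: for `s > m` the upward recursion starts from an out-of-range ket, and for `s > l` the
downward recursion does. -/
lemma Sing.eq_zero {q : ℂ} (hq0 : q ≠ 0) (hq : ∀ k : ℕ, k ≠ 0 → q ^ k ≠ 1) {ι : ℂ →+* L}
    {x y : L} {v : WW L ε} (hv : Sing q ι x y v) (hn : 2 ≤ n)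
    (hb2 : ∀ t : Fin n, n - 2 ≤ (t : ℕ) → ε t = false) {l m : ℕ} (hm : v ∈ WWlm L ε l m)
    (h0 : ∀ s : ℕ, s ≤ min l m → gco v l m s 0 = 0) : v = 0 := by
  have hι : ∀ k : ℤ, k ≠ 0 → ι (qz q k) ≠ 0 :=
    fun k hk => (map_ne_zero ι).2 (qz_ne_zero hq0 hq hk)
  have hκ : ∀ i r b, ι (kv q ε i r b) ≠ 0 :=
    fun i r b => (map_ne_zero ι).2 (kv_ne_zero hq0 i r b)
  obtain ⟨i, hi⟩ : ∃ i : Fin n, (i : ℕ) = n - 2 := ⟨⟨n - 2, by omega⟩, rfl⟩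
  obtain ⟨r, h⟩ : ∃ r : Fin n, (i : ℕ) + 1 = r := ⟨⟨i + 1, by omega⟩, rfl⟩
  have upward : ∀ (s j0 : ℤ), 0 ≤ j0 → s - m - 1 ≤ j0 → gco v l m s j0 = 0 →
      ∀ k : ℕ, gco v l m s (j0 + k) = 0 := by
    intro s j0 hj0 hj1 hz k
    induction k with
    | zero => simpa using hz
    | succ k ih =>
      by_cases hr : 0 ≤ j0 + (k + 1 : ℕ) ∧ j0 + (k + 1 : ℕ) ≤ l ∧ j0 + (k + 1 : ℕ) ≤ s ∧
          s - m ≤ j0 + (k + 1 : ℕ)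
      · push_cast at hr ⊢
        have := hv.gco_rec hb2 hi h (l := l) (m := m) (s := s) (j := j0 + (k + 1)) (by omega)
          (by omega) (by omega) (by omega)
        rw [show j0 + ((k : ℤ) + 1) - 1 = j0 + k by ring, ih, mul_zero, zero_add] at this
        exact (mul_eq_zero.1 this).resolve_left (mul_ne_zero (hι _ (by omega)) (hκ _ _ _))
      · exact gco_eq_zero hi h v hr
  have downward : ∀ (s : ℤ), (l : ℤ) < s → ∀ k : ℕ, gco v l m s (l + 1 - k) = 0 := by
    intro s hs k
    induction k with
    | zero => exact gco_eq_zero hi h v (by simp)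
    | succ k ih =>
      by_cases hr : 0 ≤ (l : ℤ) + 1 - (k + 1 : ℕ) ∧ (l : ℤ) + 1 - (k + 1 : ℕ) ≤ l ∧
          (l : ℤ) + 1 - (k + 1 : ℕ) ≤ s ∧ s - m ≤ (l : ℤ) + 1 - (k + 1 : ℕ)
      · push_cast at hr ⊢
        have := hv.gco_rec hb2 hi h (l := l) (m := m) (s := s) (j := l + 1 - k) (by omega)
          (by omega) (by omega) (by omega)
        rw [show (l : ℤ) + 1 - k - 1 = l + 1 - (k + 1) by ring, ih, mul_zero, add_zero] at this
        exact (mul_eq_zero.1 this).resolve_left (hι _ (by omega))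
      · exact gco_eq_zero hi h v hr
  have all : ∀ s j : ℤ, gco v l m s j = 0 := by
    intro s j
    by_cases hr : 0 ≤ j ∧ j ≤ l ∧ j ≤ s ∧ s - m ≤ j
    · by_cases hsl : (l : ℤ) < s
      · have := downward s hsl (l + 1 - j).toNat
        rwa [Int.toNat_of_nonneg (by omega), sub_sub_cancel] at this
      · by_cases hsm : (m : ℤ) < s
        · have := upward s (s - m - 1) (by omega) le_rfl
            (gco_eq_zero hi h v (by omega)) (j - (s - m - 1)).toNat
          rwa [Int.toNat_of_nonneg (by omega), add_sub_cancel] at this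
        · have hs := h0 s.toNat (by omega)
          rw [Int.toNat_of_nonneg (by omega)] at hs
          have := upward s 0 le_rfl (by omega) hs j.toNat
          rwa [Int.toNat_of_nonneg (by omega), zero_add] at this
    · exact gco_eq_zero hi h v hr
  refine eq_zero_of_coef fun a b ha hb => ?_
  by_cases hab : ∃ t : Fin n, (t : ℕ) < n - 2 ∧ a t + b t ≠ 0
  · exact hv.support hq0 hq hn hb2 ha hb hab
  push Not at hab
  have hav := eq_vec hi h (a := a) fun t ht => by
    have := hab t ht
    have := (ha t).1
    have := (hb t).1
    omega
  have hbv := eq_vec hi h (a := b) fun t ht => by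
    have := hab t ht
    have := (ha t).1
    have := (hb t).1
    omega
  by_cases hsum : (∑ t, a t) = l ∧ (∑ t, b t) = m
  · have := all (a i + b i) (a i)
    rw [hav, hbv, sum_vec hi h, sum_vec hi h] at hsum
    have e1 : (l : ℤ) - a i = a r := by omega
    have e2 : (m : ℤ) - (a i + b i) + a i = b r := by omega
    rw [gco, e1, e2, add_sub_cancel_left, ← hav, ← hbv] at this
    exact this
  · exact coef_of_mem hm hsum

end TwoModes

/-! ### The vectors `ξ_s` -/

section Xi

variable {L : Type} [Field L] {n : ℕ} {ε : Fin n → Bool}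

/-- The coefficient of the `j`-th term of `ξ_s^{l,m}`; it does not depend on `l`. -/
def dco (q : ℂ) (m s j : ℕ) : ℂ :=
  (-1 : ℂ) ^ j * q ^ ((j : ℤ) * (2 * (s : ℤ) - (m : ℤ) - (j : ℤ) - 1) + (m : ℤ) * (s : ℤ)) *
    qbin q s j

lemma xiA2_eq (q : ℂ) (ι : ℂ →+* L) (l m s : ℕ) :
    (xiA2 q ι ε l m s : WW L ε) = ∑ j ∈ Finset.range (s + 1), ι (dco q m s j) •
      kk L ε (vec n j ((l : ℤ) - j)) (vec n ((s : ℤ) - j) ((m : ℤ) - s + j)) := rfl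

lemma qfac_ne_zero {q : ℂ} (hq0 : q ≠ 0) (hq : ∀ k : ℕ, k ≠ 0 → q ^ k ≠ 1) (m : ℕ) :
    qfac q m ≠ 0 :=
  Finset.prod_ne_zero_iff.2 fun k _ => by
    rw [qnum_eq_qz]
    exact qz_ne_zero hq0 hq (by omega)

lemma qfac_succ (q : ℂ) (m : ℕ) : qfac q (m + 1) = qfac q m * qz q (m + 1 : ℕ) := by
  rw [qfac, Finset.prod_range_succ, qnum_eq_qz, qfac]

lemma qbin_succ {q : ℂ} (hq0 : q ≠ 0) (hq : ∀ k : ℕ, k ≠ 0 → q ^ k ≠ 1) {s j : ℕ} (h : j < s) :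
    qbin q s (j + 1) * qz q (j + 1 : ℕ) = qbin q s j * qz q (s - j : ℕ) := by
  obtain ⟨d, rfl⟩ : ∃ d, s = j + 1 + d := ⟨s - (j + 1), by omega⟩
  have e1 : j + 1 + d - (j + 1) = d := by omega
  have e2 : j + 1 + d - j = d + 1 := by omega
  rw [qbin, if_pos (by omega), qbin, if_pos (by omega), e1, e2, qfac_succ q j, qfac_succ q d]
  have := qfac_ne_zero hq0 hq j
  have := qfac_ne_zero hq0 hq d
  have : qz q (j + 1 : ℕ) ≠ 0 := qz_ne_zero hq0 hq (by omega)
  have : qz q (d + 1 : ℕ) ≠ 0 := qz_ne_zero hq0 hq (by omega)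
  field_simp

lemma dco_zero_ne {q : ℂ} (hq0 : q ≠ 0) (hq : ∀ k : ℕ, k ≠ 0 → q ^ k ≠ 1) (m s : ℕ) :
    dco q m s 0 ≠ 0 := by
  rw [dco, qbin, if_pos (Nat.zero_le _)]
  have := qfac_ne_zero hq0 hq
  exact mul_ne_zero (mul_ne_zero (by simp) (zpow_ne_zero _ hq0))
    (div_ne_zero (this _) (mul_ne_zero (this _) (this _)))

lemma kv_vec (q : ℂ) (hb2 : ∀ t : Fin n, n - 2 ≤ (t : ℕ) → ε t = false)
    {i r : Fin n} (hi : (i : ℕ) = n - 2) (h : (i : ℕ) + 1 = r) (p p' : ℤ) :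
    kv q ε i r (vec n p p') = q ^ (-p) * q ^ p' := by
  rw [kv, vec_fst hi, vec_snd hi h, qc, qc, dif_pos i.2, dif_pos r.2, hb2 ⟨i, i.2⟩ (by simp [hi]),
    hb2 ⟨r, r.2⟩ (by simp [← h, hi])]
  simp

lemma dco_succ {q : ℂ} (hq0 : q ≠ 0) (hq : ∀ k : ℕ, k ≠ 0 → q ^ k ≠ 1) {m s j : ℕ} (h : j < s) :
    dco q m s (j + 1) * qz q (j + 1 : ℕ) *
      (q ^ (-((s : ℤ) - (j + 1 : ℕ))) * q ^ ((m : ℤ) - s + (j + 1 : ℕ))) =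
    - (dco q m s j * qz q ((s : ℤ) - j)) := by
  have hb := qbin_succ hq0 hq h
  rw [Nat.cast_sub h.le] at hb
  have hp : q ^ (((j + 1 : ℕ) : ℤ) * (2 * (s : ℤ) - (m : ℤ) - ((j + 1 : ℕ) : ℤ) - 1) +
      (m : ℤ) * (s : ℤ)) * (q ^ (-((s : ℤ) - (j + 1 : ℕ))) * q ^ ((m : ℤ) - s + (j + 1 : ℕ))) =
      q ^ ((j : ℤ) * (2 * (s : ℤ) - (m : ℤ) - (j : ℤ) - 1) + (m : ℤ) * (s : ℤ)) := by
    rw [← zpow_add₀ hq0, ← zpow_add₀ hq0]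
    congr 1
    push_cast
    ring
  rw [dco, dco, pow_succ, ← hp]
  linear_combination (-(-1 : ℂ) ^ j * q ^ (((j + 1 : ℕ) : ℤ) * (2 * (s : ℤ) - (m : ℤ) -
    ((j + 1 : ℕ) : ℤ) - 1) + (m : ℤ) * (s : ℤ)) * (q ^ (-((s : ℤ) - (j + 1 : ℕ))) *
      q ^ ((m : ℤ) - s + (j + 1 : ℕ)))) * hb

lemma xi_mem (q : ℂ) (ι : ℂ →+* L) (hn : 2 ≤ n) (l m s : ℕ) :
    xiA2 q ι ε l m s ∈ WWlm L ε l m := by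
  obtain ⟨i, hi⟩ : ∃ i : Fin n, (i : ℕ) = n - 2 := ⟨⟨n - 2, by omega⟩, rfl⟩
  obtain ⟨r, h⟩ : ∃ r : Fin n, (i : ℕ) + 1 = r := ⟨⟨i + 1, by omega⟩, rfl⟩
  rw [xiA2_eq]
  refine Submodule.sum_mem _ fun j _ => Submodule.smul_mem _ _ (kk_mem ?_ ?_)
  · rw [sum_vec hi h]; ring
  · rw [sum_vec hi h]; ring

/-- `Δ(e_r) ξ_s = 0`: for `r = n - 1` the contributions of `1⊗e_r` and `e_r⊗k_r` telescope. -/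
lemma xi_sing {q : ℂ} (hq0 : q ≠ 0) (hq : ∀ k : ℕ, k ≠ 0 → q ^ k ≠ 1) (ι : ℂ →+* L) (x y : L)
    (hn : 2 ≤ n) (hb2 : ∀ t : Fin n, n - 2 ≤ (t : ℕ) → ε t = false) {l m s : ℕ}
    (hs : s ≤ min l m) : Sing q ι x y (xiA2 q ι ε l m s) := by
  intro r' hr'
  obtain ⟨i, hi⟩ : ∃ i : Fin n, (i : ℕ) = n - 2 := ⟨⟨n - 2, by omega⟩, rfl⟩
  obtain ⟨r, h⟩ : ∃ r : Fin n, (i : ℕ) + 1 = r := ⟨⟨i + 1, by omega⟩, rfl⟩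
  have hin : ∀ j ∈ Finset.range (s + 1), InR ε (vec n j ((l : ℤ) - j)) ∧
      InR ε (vec n ((s : ℤ) - j) ((m : ℤ) - s + j)) := by
    intro j hj
    rw [Finset.mem_range] at hj
    exact ⟨InR_vec hb2 (by omega) (by omega), InR_vec hb2 (by omega) (by omega)⟩
  rw [xiA2_eq, map_sum]
  by_cases hrr : (r' : ℕ) = n - 1
  · obtain rfl : r' = r := Fin.ext (by omega)
    have step : ∀ j ∈ Finset.range (s + 1),
        dE q ι ε x y r' (ι (dco q m s j) •
          kk L ε (vec n j ((l : ℤ) - j)) (vec n ((s : ℤ) - j) ((m : ℤ) - s + j))) =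
        ι (dco q m s j * qz q ((s : ℤ) - j)) • kk L ε (vec n j ((l : ℤ) - j))
            (vec n ((s : ℤ) - j - 1) ((m : ℤ) - s + j + 1)) +
        ι (dco q m s j * qz q j * (q ^ (-((s : ℤ) - j)) * q ^ ((m : ℤ) - s + j))) •
          kk L ε (vec n ((j : ℤ) - 1) ((l : ℤ) - j + 1))
            (vec n ((s : ℤ) - j) ((m : ℤ) - s + j)) := by
      intro j hj
      rw [map_smul, dE_kk q ι x y h (hin j hj).1 (hin j hj).2, vec_down hi h, vec_down hi h,
        vec_fst hi, vec_fst hi, kv_vec q hb2 hi h, smul_add, smul_smul, smul_smul]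
      simp only [map_mul, mul_assoc]
    rw [Finset.sum_congr rfl step, Finset.sum_add_distrib, Finset.sum_range_succ,
      Finset.sum_range_succ' (fun j : ℕ => ι (dco q m s j * qz q j *
        (q ^ (-((s : ℤ) - j)) * q ^ ((m : ℤ) - s + j))) •
          kk L ε (vec n ((j : ℤ) - 1) ((l : ℤ) - j + 1))
            (vec n ((s : ℤ) - j) ((m : ℤ) - s + j)))]
    simp only [sub_self, qz_zero, mul_zero, map_zero, zero_smul, add_zero, Nat.cast_zero, zero_mul]
    rw [← Finset.sum_add_distrib]
    refine Finset.sum_eq_zero fun j hj => ?_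
    rw [dco_succ hq0 hq (Finset.mem_range.1 hj), map_neg, neg_smul]
    have e1 : (((j + 1 : ℕ) : ℤ) - 1) = j := by push_cast; ring
    have e2 : (l : ℤ) - (j + 1 : ℕ) + 1 = l - j := by push_cast; ring
    have e3 : (s : ℤ) - (j + 1 : ℕ) = s - j - 1 := by push_cast; ring
    have e4 : (m : ℤ) - s + (j + 1 : ℕ) = m - s + j + 1 := by push_cast; ring
    rw [e1, e2, e3, e4, add_neg_cancel]
  · obtain ⟨i', h'⟩ : ∃ i' : Fin n, (i' : ℕ) + 1 = r' := ⟨⟨r' - 1, by omega⟩, by simp; omega⟩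
    have hz : ∀ p p' : ℤ, vec n p p' i' = 0 := by
      intro p p'
      rw [vec, if_pos]
      have := r'.2
      omega
    refine Finset.sum_eq_zero fun j hj => ?_
    rw [map_smul, dE_kk q ι x y h' (hin j hj).1 (hin j hj).2, hz, hz, qz_zero]
    simp

/-- The leading coefficients separate the vectors `ξ_s`. -/
lemma gco_xi {q : ℂ} (ι : ℂ →+* L) (hn : 2 ≤ n)
    (hb2 : ∀ t : Fin n, n - 2 ≤ (t : ℕ) → ε t = false) {l m s s' : ℕ} (hs : s ≤ min l m) :
    gco (xiA2 q ι ε l m s) l m s' 0 = if s = s' then ι (dco q m s 0) else 0 := by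
  classical
  obtain ⟨i, hi⟩ : ∃ i : Fin n, (i : ℕ) = n - 2 := ⟨⟨n - 2, by omega⟩, rfl⟩
  obtain ⟨r, h⟩ : ∃ r : Fin n, (i : ℕ) + 1 = r := ⟨⟨i + 1, by omega⟩, rfl⟩
  rw [gco, xiA2_eq, map_sum, Finset.sum_eq_single 0]
  · rw [map_smul, coef_kk _ _ (InR_vec hb2 (by omega) (by omega))
      (InR_vec hb2 (by omega) (by omega))]
    split_ifs with h1 h2 h2
    · simp
    · have := congrFun h1.2 i
      rw [vec_fst hi, vec_fst hi] at this
      omega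
    · subst h2
      simp at h1
    · simp
  · intro j hj hj0
    rw [Finset.mem_range] at hj
    rw [map_smul, coef_kk _ _ (InR_vec hb2 (by omega) (by omega))
      (InR_vec hb2 (by omega) (by omega)), if_neg, smul_zero]
    rintro ⟨h1, -⟩
    have := congrFun h1 i
    rw [vec_fst hi, vec_fst hi] at this
    omega
  · simp

lemma kv_add {q : ℂ} (hq0 : q ≠ 0) (i r : Fin n) (a b : Fin n → ℤ) :
    kv q ε i r a * kv q ε i r b = kv q ε i r (a + b) := by
  simp only [kv, Pi.add_apply, neg_add]
  rw [zpow_add₀ (qc_ne_zero hq0 _), zpow_add₀ (qc_ne_zero hq0 _)]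
  ring

lemma dK_kk {q : ℂ} (hq0 : q ≠ 0) (ι : ℂ →+* L) {i r : Fin n}
    (h : ((r : ℕ) + n - 1) % n = i) (a b : Fin n → ℤ) :
    dK q ι ε 1 r (kk L ε a b) = ι (kv q ε i r (a + b)) • kk L ε a b := by
  by_cases hab : InR ε a ∧ InR ε b
  · obtain ⟨p, rfl⟩ := exists_up hab.1
    obtain ⟨p', rfl⟩ := exists_up hab.2
    have e2 : ∀ s : Idx ε, kA q ι ε 1 r (Finsupp.single s 1) =
        ι (kv q ε i r (up s)) • ket L ε (up s) := by
      intro s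
      rw [kA, mkEnd_single, h, av_val, av_val, zpow_one, ket_up]
      rfl
    rw [kk_up, dK, opT, mkEnd_single, e2, e2, tens_smul_ket, ← map_mul, kv_add hq0, kk_up]
  · rw [kk_eq_zero hab, map_zero, smul_zero]

lemma dK_xi {q : ℂ} (hq0 : q ≠ 0) (ι : ℂ →+* L) {i r : Fin n}
    (h : ((r : ℕ) + n - 1) % n = i) (l m s : ℕ) :
    dK q ι ε 1 r (xiA2 q ι ε l m s) =
      ι (kv q ε i r (vec n s ((l : ℤ) + m - s))) • xiA2 q ι ε l m s := by
  rw [xiA2_eq, map_sum, Finset.smul_sum]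
  refine Finset.sum_congr rfl fun j _ => ?_
  rw [map_smul, dK_kk hq0 ι h, vec_add, smul_comm, add_sub_cancel,
    show (l : ℤ) - j + (m - s + j) = l + m - s by ring]

lemma gco_add (u v : WW L ε) (l m s j : ℤ) : gco (u + v) l m s j = gco u l m s j + gco v l m s j :=
  map_add _ _ _

lemma gco_sub (u v : WW L ε) (l m s j : ℤ) : gco (u - v) l m s j = gco u l m s j - gco v l m s j :=
  map_sub _ _ _

lemma gco_smul (c : L) (v : WW L ε) (l m s j : ℤ) : gco (c • v) l m s j = c * gco v l m s j :=
  map_smul _ _ _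

lemma gco_sum {α : Type} (S : Finset α) (f : α → WW L ε) (l m s j : ℤ) :
    gco (∑ k ∈ S, f k) l m s j = ∑ k ∈ S, gco (f k) l m s j :=
  map_sum _ _ _

lemma gco_comb {q : ℂ} (ι : ℂ →+* L) (hn : 2 ≤ n)
    (hb2 : ∀ t : Fin n, n - 2 ≤ (t : ℕ) → ε t = false) {l m s : ℕ} (hs : s ≤ min l m)
    (c : ℕ → L) :
    gco (∑ k ∈ Finset.range (min l m + 1), c k • xiA2 q ι ε l m k) l m s 0 =
      c s * ι (dco q m s 0) := by
  rw [gco_sum, Finset.sum_eq_single s]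
  · rw [gco_smul, gco_xi ι hn hb2 hs, if_pos rfl]
  · intro k hk hks
    rw [Finset.mem_range] at hk
    rw [gco_smul, gco_xi ι hn hb2 (by omega), if_neg hks, mul_zero]
  · intro h
    simp only [Finset.mem_range] at h
    omega

/-- The vectors `ξ_s` span the space of singular vectors of `𝒲_l⊗𝒲_m`. -/
lemma Sing.exists_comb {q : ℂ} (hq0 : q ≠ 0) (hq : ∀ k : ℕ, k ≠ 0 → q ^ k ≠ 1) {ι : ℂ →+* L}
    {x y : L} {v : WW L ε} (hv : Sing q ι x y v) (hn : 2 ≤ n)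
    (hb2 : ∀ t : Fin n, n - 2 ≤ (t : ℕ) → ε t = false) {l m : ℕ} (hm : v ∈ WWlm L ε l m) :
    ∃ c : ℕ → L, v = ∑ s ∈ Finset.range (min l m + 1), c s • xiA2 q ι ε l m s := by
  refine ⟨fun s => gco v l m s 0 / ι (dco q m s 0), ?_⟩
  rw [← sub_eq_zero]
  refine Sing.eq_zero hq0 hq (ι := ι) (x := x) (y := y) ?_ hn hb2 (l := l) (m := m) ?_ ?_
  · intro r hr
    rw [map_sub, hv r hr, map_sum, zero_sub, neg_eq_zero]
    refine Finset.sum_eq_zero fun s hs => ?_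
    rw [Finset.mem_range] at hs
    rw [map_smul, xi_sing hq0 hq ι x y hn hb2 (by omega) r hr, smul_zero]
  · exact sub_mem hm (Submodule.sum_mem _ fun s _ => Submodule.smul_mem _ _ (xi_mem q ι hn l m s))
  · intro s hs
    rw [gco_sub, gco_comb ι hn hb2 hs, div_mul_cancel₀ _ ((map_ne_zero ι).2 (dco_zero_ne hq0 hq m s)),
      sub_self]

end Xi

/-! ### The classification -/

/-- classification of singular vectors in `𝒲_l⊗𝒲_m`,
case `0 ≤ κ ≤ n-2`. -/
theorem statement_12 (q : ℂ) (hq0 : q ≠ 0) (hq : ∀ k : ℕ, k ≠ 0 → q ^ k ≠ 1)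
    {L : Type} [Field L] (ι : ℂ →+* L) (hι : Function.Injective ι)
    (x y : L) (hx : x ≠ 0) (hy : y ≠ 0)
    (n κ l m : ℕ) [NeZero n] (hn : 2 ≤ n) (hκ : κ ≤ n - 2)
    (ε : Fin n → Bool) (hε : ε = fun t : Fin n => decide ((t : ℕ) < κ)) :
    (∀ v : WW L ε, v ∈ WWlm L ε l m → v ≠ 0 →
      (∀ i : Fin n, ∃ c : L, dK q ι ε 1 i v = c • v) →
      (∀ i : Fin n, (i : ℕ) ≠ 0 → dE q ι ε x y i v = 0) →
      ∃ s : ℕ, s ≤ min l m ∧ ∃ c : L, c ≠ 0 ∧ v = c • xiA2 q ι ε l m s) ∧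
    (∀ s : ℕ, s ≤ min l m →
      xiA2 q ι ε l m s ≠ 0 ∧ xiA2 q ι ε l m s ∈ WWlm L ε l m ∧
      (∀ i : Fin n, (i : ℕ) ≠ 0 → dE q ι ε x y i (xiA2 q ι ε l m s) = 0) ∧
      (∀ i : Fin n, ∃ c : L,
        dK q ι ε 1 i (xiA2 q ι ε l m s) = c • xiA2 q ι ε l m s)) := by
  have hb2 : ∀ t : Fin n, n - 2 ≤ (t : ℕ) → ε t = false := by
    intro t ht
    rw [hε]
    simp only [decide_eq_false_iff_not, not_lt]
    omega
  refine ⟨fun v hm hv0 hK hE => ?_, fun s hs => ⟨?_, xi_mem q ι hn l m s, ?_, fun r => ?_⟩⟩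
  · obtain ⟨c, hc⟩ := Sing.exists_comb (v := v) hq0 hq hE hn hb2 hm
    obtain ⟨s, hs, hcs⟩ : ∃ s ∈ Finset.range (min l m + 1), c s ≠ 0 := by
      by_contra! hno
      exact hv0 (hc.trans (Finset.sum_eq_zero fun s hs => by rw [hno s hs, zero_smul]))
    -- the eigenvalues `q^{l+m-2s}` of `Δ(k_{n-1})` on the `ξ_s` are pairwise distinct
    obtain ⟨i, hi⟩ : ∃ i : Fin n, (i : ℕ) = n - 2 := ⟨⟨n - 2, by omega⟩, rfl⟩
    obtain ⟨r, h⟩ : ∃ r : Fin n, (i : ℕ) + 1 = r := ⟨⟨i + 1, by omega⟩, rfl⟩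
    obtain ⟨ev, hev⟩ := hK r
    have heig : ∀ k ∈ Finset.range (min l m + 1), c k ≠ 0 →
        ι (q ^ (-(k : ℤ)) * q ^ ((l : ℤ) + m - k)) = ev := by
      intro k hk hck
      rw [Finset.mem_range] at hk
      have hkm : k ≤ min l m := by omega
      have h1 : dK q ι ε 1 r v = ∑ k ∈ Finset.range (min l m + 1),
          (c k * ι (q ^ (-(k : ℤ)) * q ^ ((l : ℤ) + m - k))) • xiA2 q ι ε l m k := by
        rw [hc, map_sum]
        refine Finset.sum_congr rfl fun k _ => ?_
        rw [map_smul, dK_xi hq0 ι (pred_mod h), kv_vec q hb2 hi h, smul_smul]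
      have h2 := congrArg (fun w => gco w l m k 0) (h1.symm.trans hev)
      rw [gco_comb ι hn hb2 hkm (fun k => c k * ι (q ^ (-(k : ℤ)) * q ^ ((l : ℤ) + m - k))),
        gco_smul, hc, gco_comb ι hn hb2 hkm] at h2
      have hd : ι (dco q m k 0) ≠ 0 := (map_ne_zero ι).2 (dco_zero_ne hq0 hq m k)
      apply mul_left_cancel₀ (mul_ne_zero hck hd)
      linear_combination h2
    refine ⟨s, by rw [Finset.mem_range] at hs; omega, c s, hcs, ?_⟩
    rw [hc]
    refine Finset.sum_eq_single s (fun k hk hks => ?_) (fun h => absurd hs h)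
    by_contra hne
    have hck : c k ≠ 0 := fun h0 => hne (by rw [h0, zero_smul])
    have heq := hι ((heig k hk hck).trans (heig s hs hcs).symm)
    rw [← zpow_add₀ hq0, ← zpow_add₀ hq0] at heq
    apply zpow_ne_one hq (k := (-(k : ℤ) + (l + m - k)) - (-(s : ℤ) + (l + m - s))) (by omega)
    rw [zpow_sub₀ hq0, heq, div_self (zpow_ne_zero _ hq0)]
  · intro h0
    have h1 := gco_xi (q := q) ι hn hb2 (s' := s) hs
    rw [h0, if_pos rfl] at h1
    exact (map_ne_zero ι).2 (dco_zero_ne hq0 hq m s) (h1.symm.trans (map_zero _))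
  · exact xi_sing hq0 hq ι x y hn hb2 hs
  · exact ⟨_, dK_xi hq0 ι (i := ⟨((r : ℕ) + n - 1) % n, Nat.mod_lt _ (by omega)⟩) rfl l m s⟩

end TetraGQ
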